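/- arXiv:2403.10671 — 5 statements merged into one kernel-verified Lean document; each statement's English description precedes it below -/
import Mathlib

section
/- Let θ̂ : ℝ → ℝ^d be a prediction-regularized MAP path for L and f, i.e. ∇L(θ̂(λ)) + λ∇f(θ̂(λ)) = 0 for all λ in a neighborhood of 0. Assume θ̂ is differentiable at 0, f is continuously differentiable on a neighborhood of θ̂(0), ∇L is differentiable at θ̂(0) with Hessian H = ∇²L(θ̂(0)), and H is invertible. Then the map λ ↦ f(θ̂(λ)) is differentiable at 0 and its derivative at λ = 0 equals ⟨∇f(θ̂(0)), P⁻¹ ∇f(θ̂(0))⟩, where P = −H is the precision matrix; equivalently, the derivative equals −⟨∇f(θ̂(0)), H⁻¹ ∇f(θ̂(0))⟩. -/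
open scoped RealInnerProductSpace Topology

/-- The derivative at `λ = 0` of the prediction along a
prediction-regularized MAP path recovers the linearized-Laplace variance
`⟨∇f(θ̂ 0), P⁻¹ ∇f(θ̂ 0)⟩ = −⟨∇f(θ̂ 0), H⁻¹ ∇f(θ̂ 0)⟩` where `P = −H`. -/
theorem regvar_pred_deriv
    (d : ℕ) (L f : EuclideanSpace ℝ (Fin d) → ℝ)
    (θ : ℝ → EuclideanSpace ℝ (Fin d))
    (H : EuclideanSpace ℝ (Fin d) ≃L[ℝ] EuclideanSpace ℝ (Fin d))
    (hstat : ∀ᶠ l in 𝓝 (0 : ℝ),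
      gradient L (θ l) + l • gradient f (θ l) = 0)
    (hθ : DifferentiableAt ℝ θ 0)
    (hf : ContDiffAt ℝ 1 f (θ 0))
    (hL : HasFDerivAt (gradient L)
      (H : EuclideanSpace ℝ (Fin d) →L[ℝ] EuclideanSpace ℝ (Fin d)) (θ 0)) :
    HasDerivAt (fun l => f (θ l))
      (-⟪gradient f (θ 0), H.symm (gradient f (θ 0))⟫) 0 := by
  have hgc : ContinuousAt (gradient f) (θ 0) := by
    have h1 : ContinuousAt (fderiv ℝ f) (θ 0) :=
      (hf.fderiv_right (m := 0) (by norm_num)).continuousAt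
    exact (InnerProductSpace.toDual ℝ
      (EuclideanSpace ℝ (Fin d))).symm.continuous.continuousAt.comp h1
  have hg : ContinuousAt (fun l => gradient f (θ l)) 0 :=
    ContinuousAt.comp (f := θ) hgc hθ.continuousAt
  have h2 : HasDerivAt (fun l : ℝ => l • gradient f (θ l)) (gradient f (θ 0)) 0 := by
    rw [hasDerivAt_iff_tendsto_slope]
    refine Filter.Tendsto.congr' ?_ (hg.tendsto.mono_left nhdsWithin_le_nhds)
    filter_upwards [self_mem_nhdsWithin] with l hl
    have hl' : l ≠ 0 := hl
    simp [slope, smul_smul, hl']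
  have h3 : HasDerivAt (fun l => gradient L (θ l)) (H (deriv θ 0)) 0 :=
    hL.comp_hasDerivAt (0 : ℝ) hθ.hasDerivAt
  have h4 : HasDerivAt (fun l => gradient L (θ l)) (-gradient f (θ 0)) 0 := by
    refine h2.neg.congr_of_eventuallyEq ?_
    filter_upwards [hstat] with l hl
    exact eq_neg_of_add_eq_zero_left hl
  have h5 : deriv θ 0 = -H.symm (gradient f (θ 0)) := by
    rw [← map_neg, ← h3.unique h4, H.symm_apply_apply]
  have h6 := (hf.differentiableAt (by norm_num)).hasGradientAt.hasFDerivAt.comp_hasDerivAt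
    (0 : ℝ) hθ.hasDerivAt
  rw [h5] at h6
  simpa [Function.comp_def] using h6
end

section
/- Let θ̂ : ℝ → ℝ^d be a prediction-regularized MAP path for L and f, i.e. ∇L(θ̂(λ)) + λ∇f(θ̂(λ)) = 0 for all λ in a neighborhood of 0. Assume θ̂ is differentiable at 0, f is continuously differentiable on a neighborhood of θ̂(0), ∇L is differentiable at θ̂(0) with Hessian H = ∇²L(θ̂(0)), and H is invertible. Then the derivative of θ̂ at λ = 0 satisfies θ̂′(0) = −H⁻¹ ∇f(θ̂(0)); equivalently θ̂′(0) = P⁻¹ ∇f(θ̂(0)) where P = −H. -/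
open scoped RealInnerProductSpace Topology

/-- The derivative of the prediction-regularized MAP path at
`λ = 0` is `θ̂′(0) = −H⁻¹ ∇f(θ̂ 0) = P⁻¹ ∇f(θ̂ 0)` where `P = −H`. -/
theorem regvar_path_deriv
    (d : ℕ) (L f : EuclideanSpace ℝ (Fin d) → ℝ)
    (θ : ℝ → EuclideanSpace ℝ (Fin d))
    (H : EuclideanSpace ℝ (Fin d) ≃L[ℝ] EuclideanSpace ℝ (Fin d))
    (hstat : ∀ᶠ l in 𝓝 (0 : ℝ),
      gradient L (θ l) + l • gradient f (θ l) = 0)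
    (hθ : DifferentiableAt ℝ θ 0)
    (hf : ContDiffAt ℝ 1 f (θ 0))
    (hL : HasFDerivAt (gradient L)
      (H : EuclideanSpace ℝ (Fin d) →L[ℝ] EuclideanSpace ℝ (Fin d)) (θ 0)) :
    deriv θ 0 = -(H.symm (gradient f (θ 0))) := by
  have hgf : ContinuousAt (gradient f) (θ 0) := by
    have h1 : ContinuousAt (fderiv ℝ f) (θ 0) :=
      (hf.fderiv_right (m := 0) (by norm_num)).continuousAt
    exact ((InnerProductSpace.toDual ℝ
      (EuclideanSpace ℝ (Fin d))).symm.continuous.continuousAt).comp h1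
  have hg : ContinuousAt (fun l => gradient f (θ l)) 0 :=
    ContinuousAt.comp (f := θ) hgf hθ.continuousAt
  have h2 : HasDerivAt (fun l : ℝ => l • gradient f (θ l)) (gradient f (θ 0)) 0 := by
    rw [hasDerivAt_iff_tendsto_slope]
    refine (hg.tendsto.mono_left nhdsWithin_le_nhds).congr' ?_
    filter_upwards [self_mem_nhdsWithin] with l hl
    have hl' : l ≠ 0 := hl
    simp [slope_def_module, smul_smul, hl']
  have h1 : HasDerivAt (fun l : ℝ => gradient L (θ l)) (H (deriv θ 0)) 0 :=
    hL.comp_hasDerivAt (0 : ℝ) hθ.hasDerivAt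
  have h3 := h1.add h2
  have h4 : HasDerivAt (fun _ : ℝ => (0 : EuclideanSpace ℝ (Fin d)))
      (H (deriv θ 0) + gradient f (θ 0)) 0 :=
    h3.congr_of_eventuallyEq (hstat.mono fun l hl => hl.symm)
  have h5 := h4.unique (hasDerivAt_const _ _)
  have h6 : H (deriv θ 0) = -gradient f (θ 0) := eq_neg_of_add_eq_zero_left h5
  rw [← map_neg, ← h6, H.symm_apply_apply]
end

section
/- Let θ̂ : ℝ → ℝ^d be a prediction-regularized MAP path for L and f, i.e. ∇L(θ̂(λ)) + λ∇f(θ̂(λ)) = 0 for all λ in a neighborhood of 0. Assume θ̂ is differentiable at 0, f is continuously differentiable on a neighborhood of θ̂(0), ∇L is differentiable at θ̂(0) with Hessian H = ∇²L(θ̂(0)), and H is invertible. Let g : ℝ^d → ℝ be any function differentiable at θ̂(0). Then the map λ ↦ g(θ̂(λ)) is differentiable at 0 with derivative ⟨∇g(θ̂(0)), P⁻¹ ∇f(θ̂(0))⟩ at λ = 0, where P = −H; this is the covariance term Cov(g, f) of the linearized Laplace approximation. -/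
open scoped RealInnerProductSpace Topology

/-- For any functional `g` differentiable at `θ̂ 0`, the map
`λ ↦ g(θ̂(λ))` is differentiable at `0` with derivative
`⟨∇g(θ̂ 0), P⁻¹ ∇f(θ̂ 0)⟩ = −⟨∇g(θ̂ 0), H⁻¹ ∇f(θ̂ 0)⟩`, the covariance term
`Cov(g, f)` of the linearized Laplace approximation (`P = −H`). -/
theorem regvar_cov_deriv
    (d : ℕ) (L f g : EuclideanSpace ℝ (Fin d) → ℝ)
    (θ : ℝ → EuclideanSpace ℝ (Fin d))
    (H : EuclideanSpace ℝ (Fin d) ≃L[ℝ] EuclideanSpace ℝ (Fin d))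
    (hstat : ∀ᶠ l in 𝓝 (0 : ℝ),
      gradient L (θ l) + l • gradient f (θ l) = 0)
    (hθ : DifferentiableAt ℝ θ 0)
    (hf : ContDiffAt ℝ 1 f (θ 0))
    (hL : HasFDerivAt (gradient L)
      (H : EuclideanSpace ℝ (Fin d) →L[ℝ] EuclideanSpace ℝ (Fin d)) (θ 0))
    (hg : DifferentiableAt ℝ g (θ 0)) :
    HasDerivAt (fun l => g (θ l))
      (-⟪gradient g (θ 0), H.symm (gradient f (θ 0))⟫) 0 := by
  have hcf : ContinuousAt (fun l => gradient f (θ l)) 0 := by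
    have h1 : ContinuousAt (fderiv ℝ f) (θ 0) :=
      (hf.fderiv_right (m := 0) (by simp)).continuousAt
    have h2 : ContinuousAt (gradient f) (θ 0) :=
      (InnerProductSpace.toDual ℝ (EuclideanSpace ℝ (Fin d))).symm.continuous.continuousAt.comp h1
    exact ContinuousAt.comp (f := θ) h2 hθ.continuousAt
  have hd2 : HasDerivAt (fun l : ℝ => l • gradient f (θ l)) (gradient f (θ 0)) 0 := by
    rw [hasDerivAt_iff_tendsto_slope]
    refine (hcf.tendsto.mono_left nhdsWithin_le_nhds).congr' ?_
    filter_upwards [self_mem_nhdsWithin] with l hl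
    have hl' : l ≠ 0 := hl
    simp [slope, smul_smul, hl']
  have hd1 : HasDerivAt (fun l : ℝ => gradient L (θ l)) (H (deriv θ 0)) 0 :=
    hL.comp_hasDerivAt (0 : ℝ) hθ.hasDerivAt
  have hz : HasDerivAt (fun l : ℝ => gradient L (θ l) + l • gradient f (θ l)) 0 0 :=
    (hasDerivAt_const (0 : ℝ) (0 : EuclideanSpace ℝ (Fin d))).congr_of_eventuallyEq hstat
  have heq : H (deriv θ 0) + gradient f (θ 0) = 0 := (hd1.add hd2).unique hz
  have hder : deriv θ 0 = -H.symm (gradient f (θ 0)) := by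
    rw [← map_neg, ← eq_neg_of_add_eq_zero_left heq, H.symm_apply_apply]
  have hfin := hg.hasGradientAt.hasFDerivAt.comp_hasDerivAt (0 : ℝ) hθ.hasDerivAt
  rw [hder, InnerProductSpace.toDual_apply_apply, inner_neg_right] at hfin
  exact hfin
end

section
/- Let θ̂ : ℝ → ℝ^d be a prediction-regularized MAP path for L and f, i.e. ∇L(θ̂(λ)) + λ∇f(θ̂(λ)) = 0 for all λ in a neighborhood of 0. Assume θ̂ is differentiable at 0, f is continuously differentiable on a neighborhood of θ̂(0), ∇L is differentiable at θ̂(0) with Hessian H = ∇²L(θ̂(0)), and H is invertible. Then the finite-difference RegVar estimator converges to the linearized-Laplace variance: (1/λ)·(f(θ̂(λ)) − f(θ̂(0))) tends to ⟨∇f(θ̂(0)), P⁻¹ ∇f(θ̂(0))⟩ as λ → 0, where P = −H. -/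
open scoped RealInnerProductSpace Topology

/-- The finite-difference RegVar estimator
`(1/λ)(f(θ̂(λ)) − f(θ̂(0)))` converges, as `λ → 0`, to the linearized-Laplace
variance `⟨∇f(θ̂ 0), P⁻¹ ∇f(θ̂ 0)⟩ = −⟨∇f(θ̂ 0), H⁻¹ ∇f(θ̂ 0)⟩` with `P = −H`. -/
theorem regvar_finite_difference_limit
    (d : ℕ) (L f : EuclideanSpace ℝ (Fin d) → ℝ)
    (θ : ℝ → EuclideanSpace ℝ (Fin d))
    (H : EuclideanSpace ℝ (Fin d) ≃L[ℝ] EuclideanSpace ℝ (Fin d))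
    (hstat : ∀ᶠ l in 𝓝 (0 : ℝ),
      gradient L (θ l) + l • gradient f (θ l) = 0)
    (hθ : DifferentiableAt ℝ θ 0)
    (hf : ContDiffAt ℝ 1 f (θ 0))
    (hL : HasFDerivAt (gradient L)
      (H : EuclideanSpace ℝ (Fin d) →L[ℝ] EuclideanSpace ℝ (Fin d)) (θ 0)) :
    Filter.Tendsto (fun l : ℝ => l⁻¹ * (f (θ l) - f (θ 0))) (𝓝[≠] (0 : ℝ))
      (𝓝 (-⟪gradient f (θ 0), H.symm (gradient f (θ 0))⟫)) := by
  have hgc : ContinuousAt (fun l => gradient f (θ l)) 0 := by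
    have h1 : ContinuousAt (fderiv ℝ f) (θ 0) :=
      (hf.fderiv_right (m := 0) (by norm_num)).continuousAt
    have h2 : ContinuousAt (fun l => fderiv ℝ f (θ l)) 0 :=
      ContinuousAt.comp (f := θ) (x := (0 : ℝ)) h1 hθ.continuousAt
    exact (InnerProductSpace.toDual ℝ
      (EuclideanSpace ℝ (Fin d))).symm.continuous.continuousAt.comp h2
  have hA : HasDerivAt (fun l => gradient L (θ l)) (H (deriv θ 0)) 0 :=
    hL.comp_hasDerivAt (0 : ℝ) hθ.hasDerivAt
  have hB : HasDerivAt (fun l : ℝ => l • gradient f (θ l)) (gradient f (θ 0)) 0 := by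
    rw [hasDerivAt_iff_tendsto_slope]
    refine (hgc.tendsto.mono_left nhdsWithin_le_nhds).congr' ?_
    filter_upwards [self_mem_nhdsWithin] with l hl
    have hl' : l ≠ 0 := hl
    simp [slope, smul_smul, hl']
  have hC : H (deriv θ 0) + gradient f (θ 0) = 0 :=
    ((hA.add hB).congr_of_eventuallyEq
      (f₁ := fun _ => (0 : EuclideanSpace ℝ (Fin d)))
      (hstat.mono fun l hl => hl.symm)).unique (hasDerivAt_const _ _)
  have hD : deriv θ 0 = -H.symm (gradient f (θ 0)) := by
    rw [← map_neg, ContinuousLinearEquiv.eq_symm_apply]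
    exact eq_neg_of_add_eq_zero_left hC
  have hF : HasDerivAt (fun l => f (θ l)) (-⟪gradient f (θ 0), H.symm (gradient f (θ 0))⟫) 0 := by
    have h := (hf.differentiableAt (by norm_num)).hasGradientAt.hasFDerivAt.comp_hasDerivAt
      (0 : ℝ) hθ.hasDerivAt
    rw [hD] at h
    simpa [InnerProductSpace.toDual_apply_apply, Function.comp_def] using h
  rw [hasDerivAt_iff_tendsto_slope] at hF
  refine hF.congr fun l => ?_
  simp [slope]
end

section
/- Let θ̂ : ℝ → ℝ^d be a prediction-regularized MAP path for L and f, i.e. ∇L(θ̂(λ)) + λ∇f(θ̂(λ)) = 0 for all λ in a neighborhood of 0. Assume θ̂ is differentiable at 0, f is continuously differentiable on a neighborhood of θ̂(0), ∇L is differentiable at θ̂(0) with Hessian H = ∇²L(θ̂(0)), and that the precision matrix P = −H is symmetric positive definite. Then the derivative of λ ↦ f(θ̂(λ)) at λ = 0 is nonnegative, and it equals 0 if and only if ∇f(θ̂(0)) = 0; hence the RegVar quantity ⟨∇f(θ̂(0)), P⁻¹ ∇f(θ̂(0))⟩ is a valid (nonnegative) variance. -/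
open scoped RealInnerProductSpace Topology

/-- When the precision matrix `P = −H` is symmetric positive
definite, the RegVar derivative `d/dλ f(θ̂(λ))|₀` is nonnegative, and it is
zero iff `∇f(θ̂ 0) = 0`; hence `⟨∇f, P⁻¹ ∇f⟩` is a valid variance. -/
theorem regvar_variance_nonneg
    (d : ℕ) (L f : EuclideanSpace ℝ (Fin d) → ℝ)
    (θ : ℝ → EuclideanSpace ℝ (Fin d))
    (H : EuclideanSpace ℝ (Fin d) ≃L[ℝ] EuclideanSpace ℝ (Fin d))
    (hstat : ∀ᶠ l in 𝓝 (0 : ℝ),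
      gradient L (θ l) + l • gradient f (θ l) = 0)
    (hθ : DifferentiableAt ℝ θ 0)
    (hf : ContDiffAt ℝ 1 f (θ 0))
    (hL : HasFDerivAt (gradient L)
      (H : EuclideanSpace ℝ (Fin d) →L[ℝ] EuclideanSpace ℝ (Fin d)) (θ 0))
    (hsym : ∀ u v : EuclideanSpace ℝ (Fin d), ⟪-(H u), v⟫ = ⟪u, -(H v)⟫)
    (hpos : ∀ u : EuclideanSpace ℝ (Fin d), u ≠ 0 → 0 < ⟪u, -(H u)⟫) :
    0 ≤ deriv (fun l => f (θ l)) 0 ∧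
    (deriv (fun l => f (θ l)) 0 = 0 ↔ gradient f (θ 0) = 0) := by
  have hdf : DifferentiableAt ℝ f (θ 0) := hf.differentiableAt (by norm_num)
  have hcf : ContinuousAt (gradient f) (θ 0) := by
    have h1 : ContinuousAt (fderiv ℝ f) (θ 0) :=
      (hf.fderiv_right (m := 0) (by norm_num)).continuousAt
    exact (InnerProductSpace.toDual ℝ
      (EuclideanSpace ℝ (Fin d))).symm.continuous.continuousAt.comp h1
  have hG : ContinuousAt (fun l => gradient f (θ l)) 0 :=
    ContinuousAt.comp (f := θ) (x := (0 : ℝ)) hcf hθ.continuousAt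
  have h2 : HasDerivAt (fun l : ℝ => l • gradient f (θ l)) (gradient f (θ 0)) 0 := by
    rw [hasDerivAt_iff_tendsto_slope]
    refine Filter.Tendsto.congr' ?_ (hG.tendsto.mono_left nhdsWithin_le_nhds)
    filter_upwards [self_mem_nhdsWithin] with l hl
    have hl0 : l ≠ 0 := hl
    simp [slope, smul_smul, hl0]
  have h1 : HasDerivAt (fun l : ℝ => gradient L (θ l)) (H (deriv θ 0)) 0 :=
    hL.comp_hasDerivAt (0 : ℝ) hθ.hasDerivAt
  have h3 : HasDerivAt (fun _ : ℝ => (0 : EuclideanSpace ℝ (Fin d)))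
      (H (deriv θ 0) + gradient f (θ 0)) 0 :=
    (h1.add h2).congr_of_eventuallyEq (by
      filter_upwards [hstat] with l hl
      exact hl.symm)
  have h4 : H (deriv θ 0) + gradient f (θ 0) = 0 :=
    h3.unique (hasDerivAt_const (0 : ℝ) _)
  have h5 : gradient f (θ 0) = -(H (deriv θ 0)) := (neg_eq_of_add_eq_zero_right h4).symm
  have h6 : deriv (fun l => f (θ l)) 0 = ⟪deriv θ 0, -(H (deriv θ 0))⟫ := by
    have h7 := (hdf.hasGradientAt.hasFDerivAt.comp_hasDerivAt (0 : ℝ) hθ.hasDerivAt).deriv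
    rw [h5] at h7
    rw [real_inner_comm]
    exact h7
  rw [h6, h5]
  by_cases hv : deriv θ 0 = 0
  · simp [hv]
  · have hp := hpos _ hv
    refine ⟨hp.le, fun h => absurd h hp.ne', fun h => ?_⟩
    rw [h, inner_zero_right]
end
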